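/- Deodhar's parabolic Kazhdan–Lusztig polynomials of type q satisfy P^{J,q}_{u,v}(q) = ∑_{w ∈ W_J} (−1)^{ℓ(w)} P_{wu, v}(q) for all u, v ∈ ᴶW, where P_{x,w} are the ordinary Kazhdan–Lusztig polynomials. -/

import Mathlib

open scoped Classical Polynomial

variable {B W : Type*} [Group W] {M : CoxeterMatrix B}

/-- `ᴶW`: the minimal length right coset representatives of `W_J` in `W`,
characterized by `ℓ(s w) > ℓ(w)` for all `s ∈ J`. -/
def cosetReps (cs : CoxeterSystem M W) (J : Set B) : Set W :=
  {w | ∀ i ∈ J, cs.length w < cs.length (cs.simple i * w)}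

/-- The Bruhat order on a Coxeter group, via the subword property. -/
def bruhatLE (cs : CoxeterSystem M W) (x y : W) : Prop :=
  ∃ ω : List B, cs.IsReduced ω ∧ cs.wordProd ω = y ∧
    ∃ ω' : List B, ω'.Sublist ω ∧ cs.IsReduced ω' ∧ cs.wordProd ω' = x

/-- `q^N P(1/q)` for a polynomial `P` of degree at most `N`. -/
noncomputable def invPoly (N : ℕ) (P : Polynomial ℤ) : Polynomial ℤ :=
  Polynomial.X ^ (N - P.natDegree) * P.reverse

/-- Deodhar's parabolic Kazhdan–Lusztig data of type `y ∈ {-1, q}` for a (finite)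
Coxeter system and a subset `J ⊆ S`:  families `R = R^{J,y}` and `P = P^{J,y}` of
polynomials indexed by elements of `ᴶW` satisfying Deodhar's defining conditions.
Taking `J = ∅` recovers the ordinary `R`- and Kazhdan–Lusztig polynomials. -/
structure ParabolicKL [Fintype W] (cs : CoxeterSystem M W) (J : Set B)
    (y : Polynomial ℤ) where
  R : W → W → Polynomial ℤ
  P : W → W → Polynomial ℤ
  R_eq_zero : ∀ u ∈ cosetReps cs J, ∀ v ∈ cosetReps cs J,
    ¬ bruhatLE cs u v → R u v = 0
  R_refl : ∀ u ∈ cosetReps cs J, R u u = 1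
  R_rec : ∀ u ∈ cosetReps cs J, ∀ v ∈ cosetReps cs J, bruhatLE cs u v → u ≠ v →
    ∀ i : B, cs.length (v * cs.simple i) < cs.length v →
      (cs.length (u * cs.simple i) < cs.length u →
        R u v = R (u * cs.simple i) (v * cs.simple i))
      ∧ (cs.length u < cs.length (u * cs.simple i) →
          u * cs.simple i ∈ cosetReps cs J →
        R u v = (Polynomial.X - 1) * R u (v * cs.simple i)
          + Polynomial.X * R (u * cs.simple i) (v * cs.simple i))
      ∧ (cs.length u < cs.length (u * cs.simple i) →
          u * cs.simple i ∉ cosetReps cs J →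
        R u v = (Polynomial.X - 1 - y) * R u (v * cs.simple i))
  P_eq_zero : ∀ u ∈ cosetReps cs J, ∀ v ∈ cosetReps cs J,
    ¬ bruhatLE cs u v → P u v = 0
  P_refl : ∀ u ∈ cosetReps cs J, P u u = 1
  P_degree : ∀ u ∈ cosetReps cs J, ∀ v ∈ cosetReps cs J, bruhatLE cs u v → u ≠ v →
    2 * (P u v).natDegree + 1 ≤ cs.length v - cs.length u
  P_inversion : ∀ u ∈ cosetReps cs J, ∀ v ∈ cosetReps cs J, bruhatLE cs u v →
    invPoly (cs.length v - cs.length u) (P u v)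
      = ∑ z ∈ Finset.univ.filter
          (fun z => z ∈ cosetReps cs J ∧ bruhatLE cs u z ∧ bruhatLE cs z v),
        R u z * P z v

/-!
The alternating sums `∑_{w ∈ W_J} (-q)^{ℓ(w)} R_{wu, x}` and `∑_{w ∈ W_J} (-1)^{ℓ(w)} P_{wu, v}` of
ordinary `R`- and Kazhdan–Lusztig polynomials satisfy Deodhar's conditions of type `q`, and these
conditions determine the parabolic polynomials, because a polynomial of degree less than `N / 2`
that is fixed by `p(q) ↦ q ^ N p(1 / q)` vanishes. The key point is that the first sum, as a
function of `x ∈ W`, changes sign under left multiplication by each `s ∈ J`. So when the ordinary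
inversion formula is summed over `W_J` and its right-hand side is grouped along
`W = W_J · ᴶW`, it becomes the parabolic one. The transitivity of the Bruhat order and the length
additivity on `W_J · ᴶW` both come from strong exchange, which is proved through the action of `W`
on signed reflections.
-/

/-! ### Strong exchange -/

section StrongExchange

open CoxeterSystem

variable (cs : CoxeterSystem M W)

/-- The transformation of `W × ℤ/2` by which the simple reflection `sᵢ` acts: it conjugates the
first entry and flips the second exactly when the first entry is `sᵢ`. Restricted to reflections it
is the classical action on "signed reflections" from which strong exchange is derived. -/
noncomputable def conjParity (i : B) : Function.End (W × ZMod 2) :=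
  fun p ↦ (MulAut.conj (cs.simple i) p.1, p.2 + if p.1 = cs.simple i then 1 else 0)

theorem prod_map_conjParity_apply (ω : List B) (t : W) (a : ZMod 2) :
    (ω.map (conjParity cs)).prod (t, a) =
      (MulAut.conj (cs.wordProd ω) t,
        a + ((cs.leftInvSeq ω).count (MulAut.conj (cs.wordProd ω) t) : ℕ)) := by
  induction ω with
  | nil => simp [Function.End.one_def]
  | cons i ω ih =>
    have hcount := List.count_map_of_injective (cs.leftInvSeq ω) _
      (MulAut.conj (cs.simple i)).injective (MulAut.conj (cs.wordProd ω) t)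
    have hiff : MulAut.conj (cs.simple i) (MulAut.conj (cs.wordProd ω) t) = cs.simple i ↔
        MulAut.conj (cs.wordProd ω) t = cs.simple i := by
      rw [← (MulAut.conj (cs.simple i)).injective.eq_iff]
      simp [mul_assoc]
    rw [List.map_cons, List.prod_cons]
    change conjParity cs i ((ω.map (conjParity cs)).prod (t, a)) = _
    simp only [ih, conjParity, wordProd_cons, map_mul, MulAut.mul_apply, leftInvSeq,
      List.count_cons, hcount, beq_iff_eq, eq_comm (a := cs.simple i), hiff, Nat.cast_add,
      Nat.cast_ite, Nat.cast_one, Nat.cast_zero, add_assoc]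

theorem even_count_leftInvSeq_alternatingWord (i j : B) (t : W) :
    Even ((cs.leftInvSeq (alternatingWord i j (2 * M i j))).count t) := by
  set L := cs.leftInvSeq (alternatingWord i j (2 * M i j)) with hL
  have hlen : L.length = 2 * M i j := by simp [hL]
  have hget (k : ℕ) (hk : k < L.length) :
      L[k] = cs.simple i * (cs.simple j * cs.simple i) ^ k := by
    simp [hL, cs.getElem_leftInvSeq_alternatingWord i j _ k (hlen ▸ hk),
      prod_alternatingWord_eq_mul_pow, show (2 * k + 1) / 2 = k by omega]
  have hperiodic : L.drop (M i j) = L.take (M i j) := by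
    refine List.ext_getElem (by simp [hlen]; omega) fun k _ _ ↦ ?_
    simp [hget, pow_add]
  rw [← List.take_append_drop (M i j) L, List.count_append, hperiodic]
  exact ⟨_, rfl⟩

theorem prod_map_alternatingWord_two_mul {G : Type*} [Monoid G] (f : B → G) (i j : B) (m : ℕ) :
    ((alternatingWord i j (2 * m)).map f).prod = (f i * f j) ^ m := by
  induction m with
  | zero => simp [alternatingWord]
  | succ m ih =>
    rw [mul_add, mul_one, alternatingWord_succ', alternatingWord_succ', pow_succ', ← ih]
    simp [mul_assoc]

theorem isLiftable_conjParity : M.IsLiftable (conjParity cs) := by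
  intro i j
  have hword : cs.wordProd (alternatingWord i j (2 * M i j)) = 1 := by
    simp [prod_alternatingWord_eq_mul_pow]
  funext ⟨t, a⟩
  have hcount := (ZMod.natCast_eq_zero_iff_even (n := _)).mpr
    (even_count_leftInvSeq_alternatingWord cs i j t)
  rw [← prod_map_alternatingWord_two_mul, prod_map_conjParity_apply, hword]
  simp [Function.End.one_def, hcount]

/-- The parity of the number of occurrences of `t` in the left inversion sequence of any word for
`w`, read off from the action of `w` so that it depends on `w` only. -/
noncomputable def inversionParity (w t : W) : ZMod 2 :=
  (cs.lift ⟨conjParity cs, isLiftable_conjParity cs⟩ w (MulAut.conj w⁻¹ t, 0)).2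

theorem inversionParity_wordProd (ω : List B) (t : W) :
    inversionParity cs (cs.wordProd ω) t = ((cs.leftInvSeq ω).count t : ℕ) := by
  have hlift : cs.lift ⟨conjParity cs, isLiftable_conjParity cs⟩ (cs.wordProd ω) =
      (ω.map (conjParity cs)).prod := by
    rw [wordProd, map_list_prod, List.map_map]
    congr 2
    exact funext (cs.lift_apply_simple (isLiftable_conjParity cs))
  rw [inversionParity, hlift, prod_map_conjParity_apply]
  simp [mul_assoc]

theorem leftInvSeq_append (ω ω' : List B) :
    cs.leftInvSeq (ω ++ ω') =
      cs.leftInvSeq ω ++ (cs.leftInvSeq ω').map (MulAut.conj (cs.wordProd ω)) := by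
  induction ω with
  | nil => simp
  | cons i ω ih => simp [leftInvSeq, ih, wordProd_cons, Function.comp_def, mul_assoc]

theorem inversionParity_mul (x y t : W) :
    inversionParity cs (x * y) t =
      inversionParity cs x t + inversionParity cs y (MulAut.conj x⁻¹ t) := by
  obtain ⟨ω, rfl⟩ := cs.wordProd_surjective x
  obtain ⟨ω', rfl⟩ := cs.wordProd_surjective y
  have hcount := List.count_map_of_injective (cs.leftInvSeq ω') _
    (MulAut.conj (cs.wordProd ω)).injective (MulAut.conj (cs.wordProd ω)⁻¹ t)
  rw [map_inv, MulAut.apply_inv_self] at hcount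
  rw [← wordProd_append]
  simp only [inversionParity_wordProd, leftInvSeq_append, List.count_append, map_inv, hcount,
    Nat.cast_add]

theorem inversionParity_self {t : W} (ht : cs.IsReflection t) : inversionParity cs t t = 1 := by
  obtain ⟨g, i, rfl⟩ := ht
  have hsimple : inversionParity cs (cs.simple i) (cs.simple i) = 1 := by
    simpa using inversionParity_wordProd cs [i] (cs.simple i)
  have hinv : inversionParity cs g (MulAut.conj g (cs.simple i)) +
      inversionParity cs g⁻¹ (cs.simple i) = 0 := by
    have := inversionParity_mul cs g g⁻¹ (MulAut.conj g (cs.simple i))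
    have hone := inversionParity_wordProd cs [] (MulAut.conj g (cs.simple i))
    simp_all [mul_assoc]
  have hconj : MulAut.conj (g * cs.simple i)⁻¹ (g * cs.simple i * g⁻¹) = cs.simple i := by
    simp [mul_assoc]
  have hconj' : MulAut.conj g⁻¹ (g * cs.simple i * g⁻¹) = cs.simple i := by
    simp [mul_assoc]
  rw [inversionParity_mul, inversionParity_mul, hconj, hconj', hsimple]
  rw [MulAut.conj_apply] at hinv
  linear_combination hinv

theorem mem_leftInvSeq_of_isLeftInversion {ω : List B} {t : W}
    (h : cs.IsLeftInversion (cs.wordProd ω) t) : t ∈ cs.leftInvSeq ω := by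
  by_contra hmem
  obtain ⟨ω', hω', heq⟩ := cs.exists_isReduced (t * cs.wordProd ω)
  -- Multiplying by `t` flips the parity at `t`, so `t` is an inversion of `t w` if not of `w`.
  have hparity : inversionParity cs (cs.wordProd ω') t = 1 := by
    rw [← heq, inversionParity_mul, inversionParity_self cs h.1, inversionParity_wordProd]
    simp [h.1.mul_self, h.1.inv, List.count_eq_zero_of_not_mem hmem]
  have hmem' : t ∈ cs.leftInvSeq ω' := by
    by_contra hmem'
    simp [inversionParity_wordProd, List.count_eq_zero_of_not_mem hmem'] at hparity
  have hlt := (cs.isLeftInversion_of_mem_leftInvSeq hω' hmem').2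
  rw [← heq, ← mul_assoc, h.1.mul_self, one_mul] at hlt
  exact lt_asymm hlt h.2

theorem exists_mul_wordProd_eq_eraseIdx {ω : List B} {t : W}
    (h : cs.IsLeftInversion (cs.wordProd ω) t) :
    ∃ j < ω.length, t * cs.wordProd ω = cs.wordProd (ω.eraseIdx j) := by
  obtain ⟨j, hj, rfl⟩ := List.getElem_of_mem (mem_leftInvSeq_of_isLeftInversion cs h)
  refine ⟨j, by simpa using hj, ?_⟩
  rw [← cs.getD_leftInvSeq_mul_wordProd, List.getD_eq_getElem _ _ hj]

theorem isLeftInversion_or_exists_mul_eq_mul {x z t : W} (h : cs.IsLeftInversion (x * z) t) :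
    cs.IsLeftInversion x t ∨ ∃ z', t * (x * z) = x * z' ∧ cs.length z' < cs.length z := by
  obtain ⟨ω, hω, rfl⟩ := cs.exists_isReduced x
  obtain ⟨ζ, hζ, rfl⟩ := cs.exists_isReduced z
  rw [← wordProd_append] at h ⊢
  obtain ⟨j, hj, herase⟩ := exists_mul_wordProd_eq_eraseIdx cs h
  rw [List.length_append] at hj
  rcases lt_or_ge j ω.length with hjω | hjω
  · left
    rw [List.eraseIdx_append_of_lt_length hjω, wordProd_append, wordProd_append, ← mul_assoc,
      mul_left_inj] at herase
    refine ⟨h.1, ?_⟩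
    have hle := cs.length_wordProd_le (ω.eraseIdx j)
    rw [List.length_eraseIdx_of_lt hjω] at hle
    rw [herase, hω.eq]
    omega
  · right
    rw [List.eraseIdx_append_of_length_le hjω, wordProd_append _ ω (ζ.eraseIdx _)] at herase
    refine ⟨_, herase, ?_⟩
    have hle := cs.length_wordProd_le (ζ.eraseIdx (j - ω.length))
    rw [List.length_eraseIdx_of_lt (by omega)] at hle
    rw [hζ.eq]
    omega

theorem exists_reduced_sublist (ω : List B) :
    ∃ ω' : List B, ω'.Sublist ω ∧ cs.IsReduced ω' ∧ cs.wordProd ω' = cs.wordProd ω := by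
  induction ω with
  | nil => exact ⟨[], .refl _, by simp [CoxeterSystem.IsReduced], rfl⟩
  | cons i ω ih =>
    obtain ⟨ω', hsub, hred, hprod⟩ := ih
    have hlen := cs.length_simple_mul (cs.wordProd ω') i
    rw [hred.eq] at hlen
    by_cases hdesc : cs.IsLeftDescent (cs.wordProd ω') i
    · obtain ⟨j, hj, herase⟩ := exists_mul_wordProd_eq_eraseIdx cs
        ((cs.isLeftInversion_simple_iff_isLeftDescent _ i).mpr hdesc)
      refine ⟨ω'.eraseIdx j, ((List.eraseIdx_sublist _ _).trans hsub).cons _, ?_, ?_⟩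
      · rw [IsLeftDescent, hred.eq] at hdesc
        rw [CoxeterSystem.IsReduced, ← herase, List.length_eraseIdx_of_lt hj]
        omega
      · rw [← herase, wordProd_cons, hprod]
    · refine ⟨i :: ω', hsub.cons_cons i, ?_, by rw [wordProd_cons, wordProd_cons, hprod]⟩
      rw [IsLeftDescent, hred.eq] at hdesc
      rw [CoxeterSystem.IsReduced, wordProd_cons, List.length_cons]
      omega

end StrongExchange

/-! ### The Bruhat order -/

/-- The arrows `a → b` of the Bruhat graph, whose reflexive transitive closure is the Bruhat
order. -/
def BruhatArrow (cs : CoxeterSystem M W) (a b : W) : Prop :=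
  ∃ t, cs.IsLeftInversion b t ∧ t * b = a

section Bruhat

open CoxeterSystem Relation

variable {cs : CoxeterSystem M W}

theorem bruhatArrow_simple_mul {x : W} {i : B} (h : cs.length (cs.simple i * x) < cs.length x) :
    BruhatArrow cs (cs.simple i * x) x :=
  ⟨_, ⟨cs.isReflection_simple i, h⟩, rfl⟩

theorem bruhatArrow_mul_simple {x : W} {i : B} (h : cs.length (x * cs.simple i) < cs.length x) :
    BruhatArrow cs (x * cs.simple i) x :=
  ⟨_, ⟨(cs.isReflection_simple i).conj x, by simpa [mul_assoc] using h⟩, by simp [mul_assoc]⟩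

theorem BruhatArrow.simple_mul {a b : W} (h : BruhatArrow cs a b) (i : B) :
    BruhatArrow cs (cs.simple i * a) (cs.simple i * b) ∨ cs.simple i * a = b := by
  obtain ⟨t, ⟨ht, hlt⟩, rfl⟩ := h
  have hconj : cs.simple i * t * (cs.simple i)⁻¹ * (cs.simple i * b) = cs.simple i * (t * b) := by
    simp [mul_assoc]
  rcases ((ht.conj (cs.simple i)).length_mul_right_ne (cs.simple i * b)).lt_or_gt with hup | hdown
  · exact .inl ⟨_, ⟨ht.conj (cs.simple i), hup⟩, hconj⟩
  right
  rw [hconj] at hdown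
  have hb : cs.simple i * (cs.simple i * b) = b := cs.simple_mul_simple_cancel_left i
  have hinv : cs.IsLeftInversion (cs.simple i * (cs.simple i * b)) t := hb.symm ▸ ⟨ht, hlt⟩
  rcases isLeftInversion_or_exists_mul_eq_mul cs hinv with hleft | ⟨z', hz', hlt'⟩
  · have hone : t * cs.simple i = 1 := by simpa using hleft.2
    rw [← ht.inv, mul_eq_one_iff_eq_inv, inv_inj] at hone
    rw [hone, hb]
  -- Here `ℓ (s t b) < ℓ (s b) < ℓ (s t b)`.
  · exfalso
    rw [hb] at hz'
    rw [hz', simple_mul_simple_cancel_left] at hdown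
    exact lt_asymm hdown hlt'

theorem reflTransGen_bruhatArrow_simple_mul {a b : W} (h : ReflTransGen (BruhatArrow cs) a b)
    (i : B) : ReflTransGen (BruhatArrow cs) (cs.simple i * a) b ∨
      ReflTransGen (BruhatArrow cs) (cs.simple i * a) (cs.simple i * b) := by
  induction h using ReflTransGen.head_induction_on with
  | refl => exact .inr .refl
  | head hstep htail ih =>
    rcases hstep.simple_mul i with harrow | heq
    · exact ih.imp (.head harrow) (.head harrow)
    · exact .inl (heq ▸ htail)

theorem bruhatArrow_wordProd_cons {i : B} {ω : List B} (hω : cs.IsReduced (i :: ω)) :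
    BruhatArrow cs (cs.wordProd ω) (cs.wordProd (i :: ω)) := by
  have hred : cs.IsReduced ω := hω.drop 1
  have h := bruhatArrow_simple_mul (cs := cs) (x := cs.wordProd (i :: ω)) (i := i)
  rw [hω.eq, wordProd_cons, simple_mul_simple_cancel_left, hred.eq] at h
  exact h (by simp)

theorem reflTransGen_bruhatArrow_of_sublist {ω ω' : List B} (hω : cs.IsReduced ω)
    (h : ω'.Sublist ω) :
    ReflTransGen (BruhatArrow cs) (cs.wordProd ω') (cs.wordProd ω) := by
  induction h with
  | slnil => exact .refl
  | @cons ω' ω i _ ih =>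
    exact (ih (hω.drop 1)).tail (bruhatArrow_wordProd_cons hω)
  | @cons_cons ω' ω i _ ih =>
    rw [wordProd_cons cs i ω']
    rcases reflTransGen_bruhatArrow_simple_mul (ih (hω.drop 1)) i with hle | hle
    · exact hle.tail (bruhatArrow_wordProd_cons hω)
    · rwa [wordProd_cons]

theorem exists_reduced_sublist_of_reflTransGen {x y : W} (h : ReflTransGen (BruhatArrow cs) x y)
    {ω : List B} (hω : cs.wordProd ω = y) :
    ∃ ω' : List B, ω'.Sublist ω ∧ cs.IsReduced ω' ∧ cs.wordProd ω' = x := by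
  induction h generalizing ω with
  | refl => exact hω ▸ exists_reduced_sublist cs ω
  | tail _ harrow ih =>
    obtain ⟨t, ht, rfl⟩ := harrow
    subst hω
    obtain ⟨j, -, herase⟩ := exists_mul_wordProd_eq_eraseIdx cs ht
    obtain ⟨ω', hsub, hω'⟩ := ih herase.symm
    exact ⟨ω', hsub.trans (List.eraseIdx_sublist _ _), hω'⟩

theorem bruhatLE_iff_reflTransGen {x y : W} :
    bruhatLE cs x y ↔ ReflTransGen (BruhatArrow cs) x y := by
  constructor
  · rintro ⟨ω, hω, rfl, ω', hsub, -, rfl⟩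
    exact reflTransGen_bruhatArrow_of_sublist hω hsub
  · intro h
    obtain ⟨ω, hω, rfl⟩ := cs.exists_isReduced y
    exact ⟨ω, hω, rfl, exists_reduced_sublist_of_reflTransGen h rfl⟩

namespace bruhatLE

variable (cs) in
theorem refl (x : W) : bruhatLE cs x x :=
  bruhatLE_iff_reflTransGen.mpr .refl

theorem trans {x y z : W} (hxy : bruhatLE cs x y) (hyz : bruhatLE cs y z) : bruhatLE cs x z :=
  bruhatLE_iff_reflTransGen.mpr
    ((bruhatLE_iff_reflTransGen.mp hxy).trans (bruhatLE_iff_reflTransGen.mp hyz))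

theorem length_lt {x y : W} (h : bruhatLE cs x y) (hne : x ≠ y) : cs.length x < cs.length y := by
  obtain ⟨ω, hω, rfl, ω', hsub, hω', rfl⟩ := h
  rw [hω.eq, hω'.eq]
  refine hsub.length_le.lt_of_ne fun hlen ↦ hne ?_
  rw [hsub.eq_of_length hlen]

theorem length_le {x y : W} (h : bruhatLE cs x y) : cs.length x ≤ cs.length y := by
  by_cases heq : x = y
  · rw [heq]
  · exact (h.length_lt heq).le

theorem mul_simple {x y : W} {i : B} (h : bruhatLE cs x y)
    (hx : cs.length x < cs.length (x * cs.simple i))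
    (hy : cs.length y < cs.length (y * cs.simple i)) :
    bruhatLE cs (x * cs.simple i) (y * cs.simple i) := by
  have isReduced_concat {ω : List B} (hω : cs.IsReduced ω)
      (hlt : cs.length (cs.wordProd ω) < cs.length (cs.wordProd ω * cs.simple i)) :
      cs.IsReduced (ω.concat i) := by
    have := cs.length_mul_simple (cs.wordProd ω) i
    rw [CoxeterSystem.IsReduced, wordProd_concat, List.length_concat, ← hω.eq]
    omega
  obtain ⟨ω, hω, rfl, ω', hsub, hω', rfl⟩ := h
  refine ⟨ω.concat i, isReduced_concat hω hy, cs.wordProd_concat i ω,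
    ω'.concat i, ?_, isReduced_concat hω' hx, cs.wordProd_concat i ω'⟩
  rw [List.concat_eq_append, List.concat_eq_append]
  exact hsub.append_right [i]

end bruhatLE

theorem bruhatLE_of_bruhatArrow {x y : W} (h : BruhatArrow cs x y) : bruhatLE cs x y :=
  bruhatLE_iff_reflTransGen.mpr (.single h)

theorem bruhatLE_one_iff {x : W} : bruhatLE cs x 1 ↔ x = 1 := by
  refine ⟨fun h ↦ ?_, fun h ↦ h ▸ .refl cs 1⟩
  simpa using h.length_le

end Bruhat

/-! ### Parabolic subgroups and minimal coset representatives -/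

/-- The standard parabolic subgroup `W_J`. -/
abbrev parabolicSubgroup (cs : CoxeterSystem M W) (J : Set B) : Subgroup W :=
  Subgroup.closure (cs.simple '' J)

section Parabolic

open CoxeterSystem

variable {cs : CoxeterSystem M W} {J : Set B}

theorem simple_mem_parabolicSubgroup {i : B} (hi : i ∈ J) :
    cs.simple i ∈ parabolicSubgroup cs J :=
  Subgroup.subset_closure ⟨i, hi, rfl⟩

theorem wordProd_mem_parabolicSubgroup {ω : List B} (h : ∀ i ∈ ω, i ∈ J) :
    cs.wordProd ω ∈ parabolicSubgroup cs J := by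
  refine list_prod_mem fun x hx ↦ ?_
  obtain ⟨i, hi, rfl⟩ := List.mem_map.mp hx
  exact simple_mem_parabolicSubgroup (h i hi)

theorem exists_wordProd_eq_of_mem_parabolicSubgroup {w : W} (hw : w ∈ parabolicSubgroup cs J) :
    ∃ ω : List B, (∀ i ∈ ω, i ∈ J) ∧ cs.wordProd ω = w := by
  induction hw using Subgroup.closure_induction with
  | mem _ h =>
    obtain ⟨i, hi, rfl⟩ := h
    exact ⟨[i], by simpa using hi, cs.wordProd_singleton i⟩
  | one => exact ⟨[], by simp, cs.wordProd_nil⟩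
  | mul _ _ _ _ hx hy =>
    obtain ⟨ω, hω, rfl⟩ := hx
    obtain ⟨ω', hω', rfl⟩ := hy
    exact ⟨ω ++ ω', List.forall_mem_append.mpr ⟨hω, hω'⟩, cs.wordProd_append ω ω'⟩
  | inv _ _ hx =>
    obtain ⟨ω, hω, rfl⟩ := hx
    exact ⟨ω.reverse, by simpa using hω, cs.wordProd_reverse ω⟩

theorem exists_isReduced_of_mem_parabolicSubgroup {w : W} (hw : w ∈ parabolicSubgroup cs J) :
    ∃ ω : List B, cs.IsReduced ω ∧ (∀ i ∈ ω, i ∈ J) ∧ cs.wordProd ω = w := by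
  obtain ⟨ω, hω, rfl⟩ := exists_wordProd_eq_of_mem_parabolicSubgroup hw
  obtain ⟨ω', hsub, hred, hprod⟩ := exists_reduced_sublist cs ω
  exact ⟨ω', hred, fun i hi ↦ hω i (hsub.subset hi), hprod⟩

@[elab_as_elim]
theorem parabolicSubgroup_length_induction {p : (w : W) → w ∈ parabolicSubgroup cs J → Prop}
    (one : p 1 (one_mem _))
    (simple_mul : ∀ i (hi : i ∈ J) w (hw : w ∈ parabolicSubgroup cs J),
      cs.length w < cs.length (cs.simple i * w) → p w hw →
        p (cs.simple i * w) (mul_mem (simple_mem_parabolicSubgroup hi) hw))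
    {w : W} (hw : w ∈ parabolicSubgroup cs J) : p w hw := by
  obtain ⟨ω, hred, hω, rfl⟩ := exists_isReduced_of_mem_parabolicSubgroup hw
  induction ω with
  | nil => exact one
  | cons i ω ih =>
    have hred' : cs.IsReduced ω := hred.drop 1
    obtain ⟨hi, hω⟩ := List.forall_mem_cons.mp hω
    have hlt : cs.length (cs.wordProd ω) < cs.length (cs.simple i * cs.wordProd ω) := by
      rw [← wordProd_cons, hred.eq, hred'.eq, List.length_cons]
      exact Nat.lt_succ_self _
    exact simple_mul i hi _ (wordProd_mem_parabolicSubgroup hω) hlt (ih hred' hω _)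

theorem length_mul_of_forall_length_le {z : W}
    (hz : ∀ g ∈ parabolicSubgroup cs J, cs.length z ≤ cs.length (g * z))
    {w : W} (hw : w ∈ parabolicSubgroup cs J) :
    cs.length (w * z) = cs.length w + cs.length z := by
  induction hw using parabolicSubgroup_length_induction with
  | one => simp
  | simple_mul i hi w hw hlt ih =>
    have := cs.length_simple_mul w i
    rw [mul_assoc]
    rcases cs.length_simple_mul (w * z) i with hup | hdown
    · omega
    exfalso
    have hinv : cs.IsLeftInversion (w * z) (cs.simple i) :=
      ⟨cs.isReflection_simple i, by omega⟩
    rcases isLeftInversion_or_exists_mul_eq_mul cs hinv with hleft | ⟨z', hz', hlt'⟩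
    · exact lt_asymm hlt hleft.2
    · have hmin := hz (w⁻¹ * cs.simple i * w)
        (mul_mem (mul_mem (inv_mem hw) (simple_mem_parabolicSubgroup hi)) hw)
      rw [mul_assoc, mul_assoc, hz', inv_mul_cancel_left] at hmin
      exact hmin.not_gt hlt'

variable (cs J) in
theorem exists_mul_eq_and_forall_length_le (x : W) :
    ∃ w ∈ parabolicSubgroup cs J, ∃ z, w * z = x ∧
      ∀ g ∈ parabolicSubgroup cs J, cs.length z ≤ cs.length (g * z) := by
  let len : parabolicSubgroup cs J → ℕ := fun g ↦ cs.length (g * x)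
  let g₀ := Function.argmin len
  refine ⟨g₀⁻¹, inv_mem g₀.2, g₀ * x, inv_mul_cancel_left _ _, fun g hg ↦ ?_⟩
  rw [← mul_assoc]
  exact Function.argmin_le len (⟨g, hg⟩ * g₀)

theorem length_mul_of_mem_cosetReps {w z : W} (hw : w ∈ parabolicSubgroup cs J)
    (hz : z ∈ cosetReps cs J) : cs.length (w * z) = cs.length w + cs.length z := by
  obtain ⟨g, hg, z, rfl, hmin⟩ := exists_mul_eq_and_forall_length_le cs J z
  suffices hone : g = 1 by
    rw [hone, one_mul]
    exact length_mul_of_forall_length_le hmin hw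
  obtain ⟨ω, hred, hω, rfl⟩ := exists_isReduced_of_mem_parabolicSubgroup hg
  cases ω with
  | nil => exact cs.wordProd_nil
  | cons i ω =>
    obtain ⟨hi, hω⟩ := List.forall_mem_cons.mp hω
    have hlt := hz i hi
    have hle := cs.length_wordProd_le ω
    rw [length_mul_of_forall_length_le hmin hg, hred.eq, wordProd_cons, mul_assoc,
      simple_mul_simple_cancel_left,
      length_mul_of_forall_length_le hmin (wordProd_mem_parabolicSubgroup hω),
      List.length_cons] at hlt
    omega

theorem eq_one_of_mul_mem_cosetReps {w z : W} (hw : w ∈ parabolicSubgroup cs J)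
    (hz : z ∈ cosetReps cs J) (hwz : w * z ∈ cosetReps cs J) : w = 1 := by
  have hlen := length_mul_of_mem_cosetReps hw hz
  have hlen' := length_mul_of_mem_cosetReps (inv_mem hw) hwz
  rw [inv_mul_cancel_left, length_inv] at hlen'
  exact cs.length_eq_zero_iff.mp (by omega)

variable (cs J) in
theorem isComplement_parabolicSubgroup_cosetReps :
    Subgroup.IsComplement (parabolicSubgroup cs J : Set W) (cosetReps cs J) := by
  constructor
  · rintro ⟨⟨w, hw⟩, z, hz⟩ ⟨⟨w', hw'⟩, z', hz'⟩ (heq : w * z = w' * z')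
    have hz'_eq : z' = w'⁻¹ * w * z := by rw [mul_assoc, heq, inv_mul_cancel_left]
    have hone := eq_one_of_mul_mem_cosetReps (mul_mem (inv_mem hw') hw) hz (hz'_eq ▸ hz')
    rw [hone, one_mul] at hz'_eq
    simp [(inv_mul_eq_one.mp hone).symm, hz'_eq]
  · intro x
    obtain ⟨w, hw, z, rfl, hmin⟩ := exists_mul_eq_and_forall_length_le cs J x
    refine ⟨⟨⟨w, hw⟩, z, fun i hi ↦ ?_⟩, rfl⟩
    have := hmin _ (simple_mem_parabolicSubgroup hi)
    exact this.lt_of_ne (cs.length_simple_mul_ne z i).symm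

theorem sum_eq_sum_cosetReps_sum_parabolicSubgroup [Fintype W] {A : Type*} [AddCommMonoid A]
    (g : W → A) :
    ∑ x, g x = ∑ z : cosetReps cs J, ∑ w : parabolicSubgroup cs J, g (w * z) := by
  rw [← Fintype.sum_prod_type_right']
  exact ((Equiv.ofBijective _ (isComplement_parabolicSubgroup_cosetReps cs J)).sum_comp g).symm

theorem mem_cosetReps_empty (x : W) : x ∈ cosetReps cs ∅ :=
  fun _ hi ↦ hi.elim

theorem simple_notMem_cosetReps {i : B} (hi : i ∈ J) : cs.simple i ∉ cosetReps cs J :=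
  fun h ↦ by simpa using h i hi

theorem mul_simple_mem_cosetReps {z : W} (hz : z ∈ cosetReps cs J) {i : B}
    (h : cs.length (z * cs.simple i) < cs.length z) : z * cs.simple i ∈ cosetReps cs J := by
  intro t ht
  have := hz t ht
  have := cs.length_mul_simple z i
  have := cs.length_mul_simple (cs.simple t * z) i
  have := cs.length_simple_mul (z * cs.simple i) t
  rw [← mul_assoc] at this ⊢
  omega

/-- Deodhar's lemma. -/
theorem exists_mul_simple_eq_simple_mul {u : W} (hu : u ∈ cosetReps cs J) {i : B}
    (h : u * cs.simple i ∉ cosetReps cs J) :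
    ∃ t ∈ J, u * cs.simple i = cs.simple t * u := by
  obtain ⟨t, ht, hle⟩ : ∃ t ∈ J, cs.length (cs.simple t * (u * cs.simple i)) ≤
      cs.length (u * cs.simple i) := by simpa [cosetReps] using h
  refine ⟨t, ht, ?_⟩
  have hinv : cs.IsLeftInversion (u * cs.simple i) (cs.simple t) :=
    ⟨cs.isReflection_simple t, hle.lt_of_ne (cs.length_simple_mul_ne _ t)⟩
  rcases isLeftInversion_or_exists_mul_eq_mul cs hinv with hleft | ⟨z', hz', hlt⟩
  · exact absurd hleft.2 (hu t ht).not_gt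
  · rw [length_simple, Nat.lt_one_iff, length_eq_zero_iff] at hlt
    rw [hlt, mul_one] at hz'
    conv_rhs => rw [← hz', simple_mul_simple_cancel_left]

theorem bruhatLE_mul_of_mem_cosetReps {u w : W} (hu : u ∈ cosetReps cs J)
    (hw : w ∈ parabolicSubgroup cs J) : bruhatLE cs u (w * u) := by
  induction hw using parabolicSubgroup_length_induction with
  | one => simpa using bruhatLE.refl cs u
  | simple_mul i hi w hw hlt ih =>
    have hlen := length_mul_of_mem_cosetReps hw hu
    have hlen' := length_mul_of_mem_cosetReps (mul_mem (simple_mem_parabolicSubgroup hi) hw) hu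
    have harrow := bruhatArrow_simple_mul (cs := cs) (x := cs.simple i * w * u) (i := i)
    rw [mul_assoc, simple_mul_simple_cancel_left, ← mul_assoc] at harrow
    exact ih.trans (bruhatLE_of_bruhatArrow (harrow (by omega)))

theorem neg_one_pow_length_mul {A : Type*} [Monoid A] [HasDistribNeg A] (w w' : W) :
    (-1 : A) ^ cs.length (w * w') = (-1) ^ cs.length w * (-1) ^ cs.length w' := by
  rw [← pow_add]
  exact neg_one_pow_congr (by rw [Nat.even_iff, Nat.even_iff, cs.length_mul_mod_two])

end Parabolic

/-! ### Reflection of polynomials -/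

section Reflect

open Polynomial

variable {A : Type*} [Semiring A]

theorem reflect_add_eq_X_pow_mul {N : ℕ} {P : A[X]} (h : P.natDegree ≤ N) (k : ℕ) :
    reflect (k + N) P = X ^ k * reflect N P := by
  simpa using reflect_mul (1 : A[X]) P (natDegree_one.trans_le k.zero_le) h

theorem invPoly_eq_reflect {N : ℕ} {P : ℤ[X]} (h : P.natDegree ≤ N) :
    invPoly N P = reflect N P := by
  rw [invPoly, reverse, ← reflect_add_eq_X_pow_mul le_rfl, Nat.sub_add_cancel h]

theorem reflect_sum {ι : Type*} (N : ℕ) (s : Finset ι) (f : ι → A[X]) :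
    reflect N (∑ i ∈ s, f i) = ∑ i ∈ s, reflect N (f i) :=
  map_sum (⟨⟨reflect N, reflect_zero⟩, fun P Q ↦ reflect_add P Q N⟩ : A[X] →+ A[X]) f s

theorem eq_zero_of_reflect_eq_self {N : ℕ} {P : A[X]} (h : reflect N P = P)
    (hdeg : 2 * P.natDegree + 1 ≤ N) : P = 0 := by
  ext i
  rcases lt_or_ge P.natDegree i with hi | hi
  · rw [coeff_eq_zero_of_natDegree_lt hi, coeff_zero]
  · rw [← h, coeff_reflect, revAt_le (by omega), coeff_eq_zero_of_natDegree_lt (by omega),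
      coeff_zero]

end Reflect

/-! ### Uniqueness of parabolic Kazhdan–Lusztig polynomials -/

theorem sum_filter_bruhatLE_eq_sum_subtype [Fintype W] {cs : CoxeterSystem M W} {A : Type*}
    [NonUnitalNonAssocSemiring A] {s : Set W} {f g : W → A} {u v : W}
    (hf : ∀ z ∈ s, ¬ bruhatLE cs u z → f z = 0) (hg : ∀ z ∈ s, ¬ bruhatLE cs z v → g z = 0) :
    ∑ z ∈ Finset.univ.filter (fun z ↦ z ∈ s ∧ bruhatLE cs u z ∧ bruhatLE cs z v), f z * g z =
      ∑ z : s, f z * g z := by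
  rw [← Finset.sum_subtype (Finset.univ.filter (· ∈ s)) (by simp) fun z ↦ f z * g z]
  refine Finset.sum_subset (fun z ↦ by simp +contextual) fun z hz hz' ↦ ?_
  simp only [Finset.mem_filter, Finset.mem_univ, true_and, not_and] at hz hz'
  by_cases huz : bruhatLE cs u z
  · rw [hg z hz (hz' hz huz), mul_zero]
  · rw [hf z hz huz, zero_mul]

namespace ParabolicKL

open CoxeterSystem Polynomial

section Unique

variable [Fintype W] {cs : CoxeterSystem M W} {J : Set B} {y : ℤ[X]} (K K' : ParabolicKL cs J y)
  {u v : W}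

theorem natDegree_P_le (hu : u ∈ cosetReps cs J) (hv : v ∈ cosetReps cs J) :
    (K.P u v).natDegree ≤ cs.length v - cs.length u := by
  by_cases hle : bruhatLE cs u v
  · by_cases heq : u = v
    · subst heq
      rw [K.P_refl u hu, natDegree_one]
      exact Nat.zero_le _
    · have := K.P_degree u hu v hv hle heq
      omega
  · rw [K.P_eq_zero u hu v hv hle, natDegree_zero]
    exact Nat.zero_le _

theorem reflect_P (hu : u ∈ cosetReps cs J) (hv : v ∈ cosetReps cs J) :
    reflect (cs.length v - cs.length u) (K.P u v) =
      ∑ z : cosetReps cs J, K.R u z * K.P z v := by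
  have hR (z) (hz : z ∈ cosetReps cs J) : ¬ bruhatLE cs u z → K.R u z = 0 :=
    K.R_eq_zero u hu z hz
  have hP (z) (hz : z ∈ cosetReps cs J) : ¬ bruhatLE cs z v → K.P z v = 0 :=
    K.P_eq_zero z hz v hv
  by_cases hle : bruhatLE cs u v
  · rw [← invPoly_eq_reflect (K.natDegree_P_le hu hv), K.P_inversion u hu v hv hle,
      sum_filter_bruhatLE_eq_sum_subtype hR hP]
  · rw [K.P_eq_zero u hu v hv hle, reflect_zero, ← sum_filter_bruhatLE_eq_sum_subtype hR hP,
      Finset.filter_false_of_mem fun z _ h ↦ hle (h.2.1.trans h.2.2), Finset.sum_empty]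

theorem R_unique (hu : u ∈ cosetReps cs J) (hv : v ∈ cosetReps cs J) : K.R u v = K'.R u v := by
  induction hn : cs.length v using Nat.strong_induction_on generalizing u v with | _ n ih
  by_cases hle : bruhatLE cs u v
  swap
  · rw [K.R_eq_zero u hu v hv hle, K'.R_eq_zero u hu v hv hle]
  by_cases hne : u = v
  · subst hne
    rw [K.R_refl u hu, K'.R_refl u hu]
  have hv_ne : v ≠ 1 := fun h ↦ hne ((bruhatLE_one_iff.mp (h ▸ hle)).trans h.symm)
  obtain ⟨i, hvi⟩ := cs.exists_rightDescent_of_ne_one hv_ne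
  rw [IsRightDescent] at hvi
  have hv' := mul_simple_mem_cosetReps hv hvi
  have ih' {z : W} (hz : z ∈ cosetReps cs J) :
      K.R z (v * cs.simple i) = K'.R z (v * cs.simple i) := ih _ (hn ▸ hvi) hz hv' rfl
  obtain ⟨down, up, stuck⟩ := K.R_rec u hu v hv hle hne i hvi
  obtain ⟨down', up', stuck'⟩ := K'.R_rec u hu v hv hle hne i hvi
  rcases (cs.length_mul_simple_ne u i).lt_or_gt with hui | hui
  · rw [down hui, down' hui, ih' (mul_simple_mem_cosetReps hu hui)]
  · by_cases hu' : u * cs.simple i ∈ cosetReps cs J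
    · rw [up hui hu', up' hui hu', ih' hu, ih' hu']
    · rw [stuck hui hu', stuck' hui hu', ih' hu]

theorem P_unique (hu : u ∈ cosetReps cs J) (hv : v ∈ cosetReps cs J) : K.P u v = K'.P u v := by
  induction hn : cs.length v - cs.length u using Nat.strong_induction_on generalizing u with
  | _ n ih
  by_cases hle : bruhatLE cs u v
  swap
  · rw [K.P_eq_zero u hu v hv hle, K'.P_eq_zero u hu v hv hle]
  by_cases hne : u = v
  · subst hne
    rw [K.P_refl u hu, K'.P_refl u hu]
  have hlt := hle.length_lt hne
  have hterm (z : cosetReps cs J) (hz : z ≠ ⟨u, hu⟩) :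
      K.R u z * K.P z v - K'.R u z * K'.P z v = 0 := by
    rw [← K.R_unique K' hu z.2]
    by_cases huz : bruhatLE cs u z
    · have := huz.length_lt fun h ↦ hz (Subtype.ext h.symm)
      rw [ih _ (by omega) z.2 rfl, sub_self]
    · rw [K.R_eq_zero u hu z z.2 huz, zero_mul, zero_mul, sub_self]
  have hself : reflect (cs.length v - cs.length u) (K.P u v - K'.P u v) = K.P u v - K'.P u v := by
    rw [reflect_sub, K.reflect_P hu hv, K'.reflect_P hu hv, ← Finset.sum_sub_distrib,
      Fintype.sum_eq_single ⟨u, hu⟩ hterm, K.R_refl u hu, K'.R_refl u hu, one_mul, one_mul]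
  have hdeg : 2 * (K.P u v - K'.P u v).natDegree + 1 ≤ cs.length v - cs.length u := by
    have := K.P_degree u hu v hv hle hne
    have := K'.P_degree u hu v hv hle hne
    have := natDegree_sub_le (K.P u v) (K'.P u v)
    omega
  exact sub_eq_zero.mp (eq_zero_of_reflect_eq_self hself hdeg)

end Unique

end ParabolicKL

/-! ### Alternating sums over a parabolic subgroup -/

section AlternatingSum

variable [Fintype W] {cs : CoxeterSystem M W} {J : Set B} {A : Type*} [NonUnitalNonAssocSemiring A]
  {F : W → W → A} {u : W}

theorem sum_parabolicSubgroup_eq_zero (hF : ∀ x z, ¬ bruhatLE cs x z → F x z = 0) (c : W → A)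
    (hu : u ∈ cosetReps cs J) {x : W} (hle : ¬ bruhatLE cs u x) :
    ∑ w : parabolicSubgroup cs J, c w * F (w * u) x = 0 :=
  Finset.sum_eq_zero fun w _ ↦ by
    rw [hF _ _ fun h ↦ hle ((bruhatLE_mul_of_mem_cosetReps hu w.2).trans h), mul_zero]

theorem sum_parabolicSubgroup_self (hF : ∀ x z, ¬ bruhatLE cs x z → F x z = 0) (c : W → A)
    (hu : u ∈ cosetReps cs J) :
    ∑ w : parabolicSubgroup cs J, c w * F (w * u) u = c 1 * F u u := by
  refine (Fintype.sum_eq_single 1 fun w hw ↦ ?_).trans (by simp)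
  rw [hF _ _ fun h ↦ hw ?_, mul_zero]
  have hlen := h.length_le
  rw [length_mul_of_mem_cosetReps w.2 hu] at hlen
  exact Subtype.ext (cs.length_eq_zero_iff.mp (by omega))

end AlternatingSum

namespace ParabolicKL

open CoxeterSystem Polynomial

section Extend

variable [Fintype W] {cs : CoxeterSystem M W} {J : Set B} {y : ℤ[X]} (K : ParabolicKL cs J y)
  {u v : W} {i : B}

theorem R_eq_of_descent (hu : u ∈ cosetReps cs J) (hv : v ∈ cosetReps cs J)
    (hui : cs.length (u * cs.simple i) < cs.length u)
    (hvi : cs.length (v * cs.simple i) < cs.length v) :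
    K.R u v = K.R (u * cs.simple i) (v * cs.simple i) := by
  have hu' := mul_simple_mem_cosetReps hu hui
  have hv' := mul_simple_mem_cosetReps hv hvi
  by_cases hle : bruhatLE cs u v
  · by_cases heq : u = v
    · rw [← heq, K.R_refl u hu, K.R_refl _ hu']
    · exact (K.R_rec u hu v hv hle heq i hvi).1 hui
  · rw [K.R_eq_zero u hu v hv hle, K.R_eq_zero _ hu' _ hv' fun h ↦ hle ?_]
    simpa using h.mul_simple (i := i) (by simpa using hui) (by simpa using hvi)

theorem R_eq_of_ascent (hu : u ∈ cosetReps cs J) (hu' : u * cs.simple i ∈ cosetReps cs J)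
    (hv : v ∈ cosetReps cs J) (hui : cs.length u < cs.length (u * cs.simple i))
    (hvi : cs.length (v * cs.simple i) < cs.length v) :
    K.R u v = (X - 1) * K.R u (v * cs.simple i) + X * K.R (u * cs.simple i) (v * cs.simple i) := by
  have hv' := mul_simple_mem_cosetReps hv hvi
  by_cases hle : bruhatLE cs u v
  · have hne : u ≠ v := fun h ↦ by
      subst h
      exact lt_asymm hui hvi
    exact (K.R_rec u hu v hv hle hne i hvi).2.1 hui hu'
  · have hdown : bruhatLE cs (v * cs.simple i) v :=
      bruhatLE_of_bruhatArrow (bruhatArrow_mul_simple hvi)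
    have hup : bruhatLE cs u (u * cs.simple i) := by
      have := bruhatArrow_mul_simple (cs := cs) (x := u * cs.simple i) (i := i)
      rw [simple_mul_simple_cancel_right] at this
      exact bruhatLE_of_bruhatArrow (this hui)
    rw [K.R_eq_zero u hu v hv hle, K.R_eq_zero u hu _ hv' fun h ↦ hle (h.trans hdown),
      K.R_eq_zero _ hu' _ hv' fun h ↦ hle (hup.trans (h.trans hdown)), mul_zero, mul_zero,
      add_zero]

theorem R_add_R_mul_simple (hu : u ∈ cosetReps cs J) (hu' : u * cs.simple i ∈ cosetReps cs J)
    (hv : v ∈ cosetReps cs J) (hui : cs.length u < cs.length (u * cs.simple i))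
    (hvi : cs.length (v * cs.simple i) < cs.length v) :
    K.R u v + K.R u (v * cs.simple i) =
      X * (K.R (u * cs.simple i) v + K.R (u * cs.simple i) (v * cs.simple i)) := by
  have hdown : K.R (u * cs.simple i) v = K.R u (v * cs.simple i) := by
    simpa using K.R_eq_of_descent hu' hv (by simpa using hui) hvi
  rw [K.R_eq_of_ascent hu hu' hv hui hvi, hdown]
  ring

theorem reflect_P_of_le (hu : u ∈ cosetReps cs J) (hv : v ∈ cosetReps cs J) {n : ℕ}
    (hn : n ≤ cs.length u) :
    reflect (cs.length v - n) (K.P u v) =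
      X ^ (cs.length u - n) * reflect (cs.length v - cs.length u) (K.P u v) := by
  by_cases hle : bruhatLE cs u v
  · rw [← reflect_add_eq_X_pow_mul (K.natDegree_P_le hu hv)]
    have := hle.length_le
    congr 1
    omega
  · rw [K.P_eq_zero u hu v hv hle, reflect_zero, reflect_zero, mul_zero]

end Extend

section Alternating

variable [Fintype W] {cs : CoxeterSystem M W} {y : ℤ[X]} (K : ParabolicKL cs ∅ y) {J : Set B}
  {u v : W} {i : B}

variable (J) in
/-- The alternating sum `∑_{w ∈ W_J} (-q)^{ℓ(w)} R_{wu, x}` of ordinary `R`-polynomials, which is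
`R^{J,q}_{u,x}` when `x ∈ ᴶW`. It is also needed for other `x`, where it is antisymmetric under
left multiplication by `W_J`. -/
noncomputable def altR (u x : W) : ℤ[X] :=
  ∑ w : parabolicSubgroup cs J, (-X) ^ cs.length w * K.R (w * u) x

variable (J) in
/-- The alternating sum `∑_{w ∈ W_J} (-1)^{ℓ(w)} P_{wu, v}` of ordinary Kazhdan–Lusztig
polynomials. -/
noncomputable def altP (u v : W) : ℤ[X] :=
  ∑ w : parabolicSubgroup cs J, (-1) ^ cs.length w * K.P (w * u) v

theorem altR_eq_zero (hu : u ∈ cosetReps cs J) {x : W} (h : ¬ bruhatLE cs u x) :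
    K.altR J u x = 0 :=
  sum_parabolicSubgroup_eq_zero
    (fun _ _ ↦ K.R_eq_zero _ (mem_cosetReps_empty _) _ (mem_cosetReps_empty _))
    (fun w ↦ (-X) ^ cs.length w) hu h

theorem altR_self (hu : u ∈ cosetReps cs J) : K.altR J u u = 1 := by
  refine (sum_parabolicSubgroup_self
    (fun _ _ ↦ K.R_eq_zero _ (mem_cosetReps_empty _) _ (mem_cosetReps_empty _))
    (fun w ↦ (-X) ^ cs.length w) hu).trans ?_
  rw [length_one, pow_zero, one_mul, K.R_refl u (mem_cosetReps_empty u)]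

theorem altR_eq_of_descent (hu : u ∈ cosetReps cs J)
    (hui : cs.length (u * cs.simple i) < cs.length u) {x : W}
    (hxi : cs.length (x * cs.simple i) < cs.length x) :
    K.altR J u x = K.altR J (u * cs.simple i) (x * cs.simple i) := by
  refine Finset.sum_congr rfl fun w _ ↦ ?_
  have hlen := length_mul_of_mem_cosetReps w.2 hu
  have hlen' := length_mul_of_mem_cosetReps w.2 (mul_simple_mem_cosetReps hu hui)
  rw [← mul_assoc] at hlen' ⊢
  rw [K.R_eq_of_descent (mem_cosetReps_empty _) (mem_cosetReps_empty _) (by omega) hxi]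

theorem altR_eq_of_ascent (hu : u ∈ cosetReps cs J) (hu' : u * cs.simple i ∈ cosetReps cs J)
    (hui : cs.length u < cs.length (u * cs.simple i)) {x : W}
    (hxi : cs.length (x * cs.simple i) < cs.length x) :
    K.altR J u x = (X - 1) * K.altR J u (x * cs.simple i) +
      X * K.altR J (u * cs.simple i) (x * cs.simple i) := by
  simp only [altR, Finset.mul_sum, ← Finset.sum_add_distrib]
  refine Finset.sum_congr rfl fun w _ ↦ ?_
  have hlen := length_mul_of_mem_cosetReps w.2 hu
  have hlen' := length_mul_of_mem_cosetReps w.2 hu'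
  rw [← mul_assoc (w : W)] at hlen' ⊢
  rw [K.R_eq_of_ascent (mem_cosetReps_empty _) (mem_cosetReps_empty _) (mem_cosetReps_empty _)
    (by omega) hxi]
  ring

theorem altR_eq_neg_of_notMem (hu : u ∈ cosetReps cs J) (hu' : u * cs.simple i ∉ cosetReps cs J)
    {x : W} (hxi : cs.length (x * cs.simple i) < cs.length x) :
    K.altR J u x = -K.altR J u (x * cs.simple i) := by
  obtain ⟨t, ht, hut⟩ := exists_mul_simple_eq_simple_mul hu hu'
  let f (w : W) : ℤ[X] :=
    (-X) ^ cs.length w * (K.R (w * u) x + K.R (w * u) (x * cs.simple i))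
  -- Since `w t u = w u s`, the terms of `w` and `w t` cancel.
  have hcancel {w : W} (hw : w ∈ parabolicSubgroup cs J)
      (hlt : cs.length w < cs.length (w * cs.simple t)) : f (w * cs.simple t) = -f w := by
    have hlen := length_mul_of_mem_cosetReps hw hu
    have hlen' := length_mul_of_mem_cosetReps
      (mul_mem hw (simple_mem_parabolicSubgroup ht)) hu
    have hwt : w * cs.simple t * u = w * u * cs.simple i := by rw [mul_assoc, ← hut, mul_assoc]
    have hsucc : cs.length (w * cs.simple t) = cs.length w + 1 := by
      have := cs.length_mul_simple w t
      omega
    rw [hwt] at hlen'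
    simp only [f]
    rw [hwt, hsucc, K.R_add_R_mul_simple (mem_cosetReps_empty (w * u)) (mem_cosetReps_empty _)
      (mem_cosetReps_empty _) (by omega) hxi]
    ring
  have hantisymm (w : parabolicSubgroup cs J) : f (w * cs.simple t) = -f w := by
    rcases (cs.length_mul_simple_ne w t).lt_or_gt with hlt | hlt
    · have := hcancel (mul_mem w.2 (simple_mem_parabolicSubgroup ht)) (by simpa using hlt)
      rw [simple_mul_simple_cancel_right] at this
      rw [this, neg_neg]
    · exact hcancel w.2 hlt
  have hsum : ∑ w : parabolicSubgroup cs J, f w = -∑ w : parabolicSubgroup cs J, f w := by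
    let t' : parabolicSubgroup cs J := ⟨cs.simple t, simple_mem_parabolicSubgroup ht⟩
    rw [← Finset.sum_neg_distrib,
      ← Equiv.sum_comp (Equiv.mulRight t') fun w : parabolicSubgroup cs J ↦ f w]
    exact Finset.sum_congr rfl fun w _ ↦ hantisymm w
  rw [eq_neg_iff_add_eq_zero, altR, altR, ← Finset.sum_add_distrib]
  simpa only [f, mul_add] using self_eq_neg.mp hsum

theorem exists_altR_eq (hu : u ∈ cosetReps cs J) (i : B) :
    ∃ a b : ℤ[X], ∃ u' ∈ cosetReps cs J, ∀ x : W, cs.length (x * cs.simple i) < cs.length x →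
      K.altR J u x = a * K.altR J u (x * cs.simple i) + b * K.altR J u' (x * cs.simple i) := by
  rcases (cs.length_mul_simple_ne u i).lt_or_gt with hui | hui
  · refine ⟨0, 1, _, mul_simple_mem_cosetReps hu hui, fun x hxi ↦ ?_⟩
    rw [K.altR_eq_of_descent hu hui hxi, zero_mul, zero_add, one_mul]
  · by_cases hu' : u * cs.simple i ∈ cosetReps cs J
    · exact ⟨_, _, _, hu', fun x hxi ↦ K.altR_eq_of_ascent hu hu' hui hxi⟩
    · refine ⟨-1, 0, u, hu, fun x hxi ↦ ?_⟩
      rw [K.altR_eq_neg_of_notMem hu hu' hxi, zero_mul, add_zero, neg_one_mul]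

theorem altR_simple (hu : u ∈ cosetReps cs J) {t : B} (ht : t ∈ J) :
    K.altR J u (cs.simple t) = -K.altR J u 1 := by
  have hmem := simple_notMem_cosetReps (cs := cs) ht
  by_cases hone : u = 1
  · subst hone
    rw [K.altR_eq_neg_of_notMem (i := t) hu (by rwa [one_mul]) (by simp), simple_mul_simple_self]
  · have hle : ¬ bruhatLE cs u (cs.simple t) := fun h ↦ by
      have := h.length_lt fun heq ↦ hmem (heq ▸ hu)
      rw [length_simple, Nat.lt_one_iff, length_eq_zero_iff] at this
      exact hone this
    rw [K.altR_eq_zero hu hle, K.altR_eq_zero hu (mt bruhatLE_one_iff.mp hone), neg_zero]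

theorem altR_simple_mul_of_lt (hu : u ∈ cosetReps cs J) {t : B} (ht : t ∈ J) {x : W}
    (hx : cs.length x < cs.length (cs.simple t * x)) :
    K.altR J u (cs.simple t * x) = -K.altR J u x := by
  induction hn : cs.length x generalizing u x with
  | zero =>
    rw [length_eq_zero_iff] at hn
    rw [hn, mul_one, K.altR_simple hu ht]
  | succ n ih =>
    have hne : x ≠ 1 := fun h ↦ by simp [h] at hn
    obtain ⟨i, hxi⟩ := cs.exists_rightDescent_of_ne_one hne
    rw [IsRightDescent] at hxi
    have := cs.length_mul_simple x i
    have := cs.length_simple_mul x t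
    have := cs.length_mul_simple (cs.simple t * x) i
    have hlen := cs.length_simple_mul (x * cs.simple i) t
    rw [← mul_assoc] at hlen
    have hlt : cs.length (x * cs.simple i) < cs.length (cs.simple t * (x * cs.simple i)) := by
      rw [← mul_assoc]
      omega
    obtain ⟨a, b, u', hu', hrec⟩ := K.exists_altR_eq hu i
    rw [hrec (cs.simple t * x) (by omega), hrec x hxi, mul_assoc, ih hu hlt (by omega),
      ih hu' hlt (by omega)]
    ring

theorem altR_simple_mul (hu : u ∈ cosetReps cs J) {t : B} (ht : t ∈ J) (x : W) :
    K.altR J u (cs.simple t * x) = -K.altR J u x := by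
  rcases (cs.length_simple_mul_ne x t).lt_or_gt with hlt | hlt
  · have := K.altR_simple_mul_of_lt hu ht (x := cs.simple t * x) (by simpa using hlt)
    rw [simple_mul_simple_cancel_left] at this
    rw [this, neg_neg]
  · exact K.altR_simple_mul_of_lt hu ht hlt

theorem altR_mul (hu : u ∈ cosetReps cs J) {w : W} (hw : w ∈ parabolicSubgroup cs J) (x : W) :
    K.altR J u (w * x) = (-1) ^ cs.length w * K.altR J u x := by
  induction hw using parabolicSubgroup_length_induction with
  | one => simp
  | simple_mul i hi w _ _ ih =>
    rw [mul_assoc, K.altR_simple_mul hu hi, ih, neg_one_pow_length_mul, length_simple, pow_one,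
      neg_one_mul, neg_mul]

theorem altP_eq_zero (hu : u ∈ cosetReps cs J) (h : ¬ bruhatLE cs u v) : K.altP J u v = 0 :=
  sum_parabolicSubgroup_eq_zero
    (fun _ _ ↦ K.P_eq_zero _ (mem_cosetReps_empty _) _ (mem_cosetReps_empty _))
    (fun w ↦ (-1) ^ cs.length w) hu h

theorem altP_self (hu : u ∈ cosetReps cs J) : K.altP J u u = 1 := by
  refine (sum_parabolicSubgroup_self
    (fun _ _ ↦ K.P_eq_zero _ (mem_cosetReps_empty _) _ (mem_cosetReps_empty _))
    (fun w ↦ (-1) ^ cs.length w) hu).trans ?_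
  rw [length_one, pow_zero, one_mul, K.P_refl u (mem_cosetReps_empty u)]

theorem two_mul_natDegree_altP_add_one_le (hu : u ∈ cosetReps cs J) (hv : v ∈ cosetReps cs J)
    (hle : bruhatLE cs u v) (hne : u ≠ v) :
    2 * (K.altP J u v).natDegree + 1 ≤ cs.length v - cs.length u := by
  have hlt := hle.length_lt hne
  suffices hdeg : (K.altP J u v).natDegree ≤ (cs.length v - cs.length u - 1) / 2 by omega
  refine natDegree_sum_le_of_forall_le _ _ fun w _ ↦ ?_
  have hsign : ((-1 : ℤ[X]) ^ cs.length w * K.P (w * u) v).natDegree =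
      (K.P (w * u) v).natDegree := by
    rcases neg_one_pow_eq_or ℤ[X] (cs.length w) with h | h <;> simp [h]
  rw [hsign]
  by_cases hwle : bruhatLE cs (w * u) v
  · have hwne : (w : W) * u ≠ v := fun h ↦ hne <| by
      rwa [eq_one_of_mul_mem_cosetReps w.2 hu (h ▸ hv), one_mul] at h
    have := K.P_degree _ (mem_cosetReps_empty _) _ (mem_cosetReps_empty _) hwle hwne
    have := length_mul_of_mem_cosetReps w.2 hu
    omega
  · rw [K.P_eq_zero _ (mem_cosetReps_empty _) _ (mem_cosetReps_empty _) hwle, natDegree_zero]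
    exact Nat.zero_le _

theorem natDegree_altP_le (hu : u ∈ cosetReps cs J) (hv : v ∈ cosetReps cs J)
    (hle : bruhatLE cs u v) :
    (K.altP J u v).natDegree ≤ cs.length v - cs.length u := by
  by_cases heq : u = v
  · rw [← heq, K.altP_self hu, natDegree_one]
    exact Nat.zero_le _
  · have := K.two_mul_natDegree_altP_add_one_le hu hv hle heq
    omega

theorem reflect_altP_eq_sum_altR_mul_P (hu : u ∈ cosetReps cs J) (v : W) :
    reflect (cs.length v - cs.length u) (K.altP J u v) = ∑ x, K.altR J u x * K.P x v := by
  have hterm (w : parabolicSubgroup cs J) :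
      reflect (cs.length v - cs.length u) ((-1) ^ cs.length w * K.P (w * u) v) =
        ∑ x, (-X) ^ cs.length w * K.R (w * u) x * K.P x v := by
    have hlen := length_mul_of_mem_cosetReps w.2 hu
    have hsign : (-1 : ℤ[X]) ^ cs.length w = C ((-1) ^ cs.length w) := by simp
    have hinversion : reflect (cs.length v - cs.length (w * u)) (K.P (w * u) v) =
        ∑ x, K.R (w * u) x * K.P x v := by
      rw [K.reflect_P (mem_cosetReps_empty _) (mem_cosetReps_empty _)]
      exact (Equiv.subtypeUnivEquiv mem_cosetReps_empty).sum_comp fun x ↦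
        K.R (w * u) x * K.P x v
    rw [hsign, reflect_C_mul, K.reflect_P_of_le (mem_cosetReps_empty _) (mem_cosetReps_empty _)
      (n := cs.length u) (by omega), hinversion, ← hsign, hlen, Nat.add_sub_cancel, ← mul_assoc,
      ← mul_pow, neg_one_mul, Finset.mul_sum]
    simp only [mul_assoc]
  simp only [altP, altR, reflect_sum, hterm, Finset.sum_mul]
  exact Finset.sum_comm

theorem reflect_altP (hu : u ∈ cosetReps cs J) (v : W) :
    reflect (cs.length v - cs.length u) (K.altP J u v) =
      ∑ z : cosetReps cs J, K.altR J u z * K.altP J z v := by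
  rw [K.reflect_altP_eq_sum_altR_mul_P hu,
    sum_eq_sum_cosetReps_sum_parabolicSubgroup (cs := cs) (J := J)]
  refine Finset.sum_congr rfl fun z _ ↦ ?_
  rw [altP, Finset.mul_sum]
  refine Finset.sum_congr rfl fun w _ ↦ ?_
  rw [K.altR_mul hu w.2]
  ring

variable (J) in
/-- The parabolic Kazhdan–Lusztig datum of type `q` formed by the alternating sums over `W_J` of
ordinary `R`- and Kazhdan–Lusztig polynomials. -/
noncomputable def alternating : ParabolicKL cs J X where
  R := K.altR J
  P := K.altP J
  R_eq_zero _ hu _ _ := K.altR_eq_zero hu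
  R_refl _ := K.altR_self
  R_rec u hu v _ _ _ i hvi :=
    ⟨fun hui ↦ K.altR_eq_of_descent hu hui hvi,
      fun hui hu' ↦ K.altR_eq_of_ascent hu hu' hui hvi,
      fun _ hu' ↦ by rw [K.altR_eq_neg_of_notMem hu hu' hvi]; ring⟩
  P_eq_zero _ hu _ _ := K.altP_eq_zero hu
  P_refl _ := K.altP_self
  P_degree _ hu _ := K.two_mul_natDegree_altP_add_one_le hu
  P_inversion u hu v hv hle := by
    rw [invPoly_eq_reflect (K.natDegree_altP_le hu hv hle), K.reflect_altP hu v,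
      sum_filter_bruhatLE_eq_sum_subtype (fun _ _ ↦ K.altR_eq_zero hu)
        fun _ hz ↦ K.altP_eq_zero hz]

end Alternating

end ParabolicKL

/-- Deodhar's parabolic Kazhdan–Lusztig polynomials of type `q`
satisfy `P^{J,q}_{u,v} = ∑_{w ∈ W_J} (-1)^{ℓ(w)} P_{wu, v}` for all `u, v ∈ ᴶW`,
where the `P_{x,w}` are the ordinary Kazhdan–Lusztig polynomials. -/
theorem stmt13 [Fintype W] (cs : CoxeterSystem M W) (J : Set B)
    (y₀ : Polynomial ℤ)
    (pkl : ParabolicKL cs J Polynomial.X)    -- type `q` parabolic KL polynomials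
    (okl : ParabolicKL cs (∅ : Set B) y₀)    -- ordinary KL polynomials
    (u v : W) (hu : u ∈ cosetReps cs J) (hv : v ∈ cosetReps cs J) :
    pkl.P u v
      = ∑ w ∈ Finset.univ.filter (fun w => w ∈ Subgroup.closure (cs.simple '' J)),
          (-1 : Polynomial ℤ) ^ cs.length w * okl.P (w * u) v := by
  rw [pkl.P_unique (okl.alternating J) hu hv]
  exact (Finset.sum_subtype _ (by simp) fun w ↦ (-1) ^ cs.length w * okl.P (w * u) v).symm
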